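/- arXiv:math/0312030 — 3 statements merged into one kernel-verified Lean document; each statement's English description precedes it below -/
import Mathlib

section
/- Let n, p ≥ 1 and let G be a finite subgroup of GL(n, ℂ). Let F : ℂ[u₁,…,uₙ] → ℂ[[X₁,…,X_p]] be a ℂ-algebra homomorphism such that F(σ) = 0 for every G-invariant polynomial σ whose constant coefficient is zero. Then F(uᵢ) = 0 for every i = 1,…,n; equivalently, F sends every polynomial with zero constant coefficient to 0. -/
/-!
Let `ε` be evaluation at the origin. On an invariant `σ` the homomorphism `F` agrees with `ε`, since
`σ - ε σ` is invariant and vanishes at the origin. A polynomial `P` is a root of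
`∏_{g ∈ G} (T - g • P)`, whose coefficients are invariant, so applying `F` to its coefficients gives
the same result as applying `ε`, and `∏_{g ∈ G} (F P - ε (g • P)) = 0`. As the action is linear,
`ε (g • P) = ε P`; if this is zero, then `F P ^ |G| = 0`, so `F P = 0` because the power series ring
is reduced.
-/

open MvPolynomial

/-- The action of `g ∈ GL(n, ℂ)` on polynomials by linear substitution:
`(g • P)(v) = P(g⁻¹ · v)`. -/
noncomputable def glAct {n : ℕ} (g : GL (Fin n) ℂ) :
    MvPolynomial (Fin n) ℂ →ₐ[ℂ] MvPolynomial (Fin n) ℂ :=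
  aeval fun i => ∑ j, C ((↑(g⁻¹) : Matrix (Fin n) (Fin n) ℂ) i j) * X j

section FiniteGroupAction

variable {G A B : Type*} [Group G] [CommRing A] [MulSemiringAction G A] [CommRing B]

theorem prod_sub_map_smul_eq_zero [Fintype G] {φ ψ : A →+* B}
    (hφψ : ∀ a : A, (∀ g : G, g • a = a) → φ a = ψ a) (a : A) :
    ∏ g : G, (φ a - ψ (g • a)) = 0 := by
  have map_charpoly : (MulSemiringAction.charpoly G a).map ψ =
      (MulSemiringAction.charpoly G a).map φ := by
    ext k
    simp only [Polynomial.coeff_map]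
    exact (hφψ _ (MulSemiringAction.smul_coeff_charpoly a k)).symm
  calc ∏ g : G, (φ a - ψ (g • a))
      = ((MulSemiringAction.charpoly G a).map ψ).eval (φ a) := by
        simp [MulSemiringAction.charpoly_eq, Polynomial.map_prod, Polynomial.eval_prod]
    _ = φ ((MulSemiringAction.charpoly G a).eval a) := by
        rw [map_charpoly, Polynomial.eval_map_apply]
    _ = 0 := by rw [MulSemiringAction.eval_charpoly, map_zero]

variable {R : Type*} [CommRing R] [Algebra R A] [Algebra R B] [SMulCommClass G R A]
  {ε : A →ₐ[R] R} {F : A →ₐ[R] B}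

theorem map_eq_algebraMap_augmentation_of_invariant
    (hF : ∀ a : A, (∀ g : G, g • a = a) → ε a = 0 → F a = 0)
    {a : A} (ha : ∀ g : G, g • a = a) : F a = algebraMap R B (ε a) := by
  have map_sub_eq_zero : F (a - algebraMap R A (ε a)) = 0 :=
    hF _ (fun g => by rw [smul_sub, ha g, smul_algebraMap]) (by simp)
  rwa [map_sub, F.commutes, sub_eq_zero] at map_sub_eq_zero

theorem map_eq_zero_of_augmentation_smul_eq_zero [Finite G] [IsReduced B]
    (hF : ∀ a : A, (∀ g : G, g • a = a) → ε a = 0 → F a = 0)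
    {a : A} (ha : ∀ g : G, ε (g • a) = 0) : F a = 0 := by
  cases nonempty_fintype G
  have prod_eq_zero : ∏ g : G, (F a - algebraMap R B (ε (g • a))) = 0 :=
    prod_sub_map_smul_eq_zero (φ := (F : A →+* B)) (ψ := (algebraMap R B).comp (ε : A →+* R))
      (fun _ => map_eq_algebraMap_augmentation_of_invariant hF) a
  have pow_card_eq_zero : F a ^ Fintype.card G = 0 := by
    simpa [ha] using prod_eq_zero
  exact eq_zero_of_pow_eq_zero pow_card_eq_zero

end FiniteGroupAction

section LinearSubstitution

variable {n : ℕ}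

theorem glAct_one : glAct (1 : GL (Fin n) ℂ) = AlgHom.id ℂ _ := by
  ext1 i
  simp [glAct, Matrix.one_apply]

theorem glAct_mul (g h : GL (Fin n) ℂ) : glAct (g * h) = (glAct g).comp (glAct h) := by
  ext1 i
  simp only [glAct, AlgHom.comp_apply, aeval_X, map_sum, map_mul, algHom_C, mul_inv_rev,
    Units.val_mul, Matrix.mul_apply, Finset.sum_mul, Finset.mul_sum, algebraMap_eq]
  rw [Finset.sum_comm]
  simp only [mul_assoc]

theorem constantCoeff_glAct (g : GL (Fin n) ℂ) (P : MvPolynomial (Fin n) ℂ) :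
    constantCoeff (glAct g P) = constantCoeff P := by
  have comp_eq : constantCoeff.comp (glAct g).toRingHom = constantCoeff := by
    ext i <;> simp [glAct]
  exact DFunLike.congr_fun comp_eq P

/-- Linear substitution `glAct`, as an action of `GL(n, ℂ)` on the polynomial ring by ring
automorphisms. -/
noncomputable instance glMulSemiringAction :
    MulSemiringAction (GL (Fin n) ℂ) (MvPolynomial (Fin n) ℂ) where
  smul g P := glAct g P
  one_smul P := DFunLike.congr_fun glAct_one P
  mul_smul g h P := DFunLike.congr_fun (glAct_mul g h) P
  smul_zero g := map_zero (glAct g)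
  smul_add g := map_add (glAct g)
  smul_one g := map_one (glAct g)
  smul_mul g := map_mul (glAct g)

instance glSMulCommClass :
    SMulCommClass (GL (Fin n) ℂ) ℂ (MvPolynomial (Fin n) ℂ) where
  smul_comm g := map_smul (glAct g)

end LinearSubstitution

theorem stmt0_general {n : ℕ} {B : Type*} [CommRing B] [IsReduced B] [Algebra ℂ B]
    (G : Subgroup (GL (Fin n) ℂ)) (hGfin : (G : Set (GL (Fin n) ℂ)).Finite)
    (F : MvPolynomial (Fin n) ℂ →ₐ[ℂ] B)
    (hF : ∀ σ : MvPolynomial (Fin n) ℂ,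
      (∀ g ∈ G, glAct g σ = σ) → coeff 0 σ = 0 → F σ = 0)
    (P : MvPolynomial (Fin n) ℂ) (hP : coeff 0 P = 0) : F P = 0 := by
  have : Finite G := hGfin
  let ε : MvPolynomial (Fin n) ℂ →ₐ[ℂ] ℂ := { constantCoeff with commutes' := constantCoeff_C _ }
  have F_invariant (σ : MvPolynomial (Fin n) ℂ) (hσ : ∀ g : G, g • σ = σ) (hεσ : ε σ = 0) :
      F σ = 0 :=
    hF σ (fun g hg => hσ ⟨g, hg⟩) hεσ
  have ε_smul (g : G) : ε (g • P) = 0 := (constantCoeff_glAct (g : GL (Fin n) ℂ) P).trans hP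
  exact map_eq_zero_of_augmentation_smul_eq_zero F_invariant ε_smul

theorem stmt0 (n p : ℕ) (hn : 1 ≤ n) (hp : 1 ≤ p)
    (G : Subgroup (GL (Fin n) ℂ)) (hGfin : (G : Set (GL (Fin n) ℂ)).Finite)
    (F : MvPolynomial (Fin n) ℂ →ₐ[ℂ] MvPowerSeries (Fin p) ℂ)
    (hF : ∀ σ : MvPolynomial (Fin n) ℂ,
      (∀ g ∈ G, glAct g σ = σ) → coeff 0 σ = 0 → F σ = 0) :
    (∀ i : Fin n, F (X i) = 0) ∧
    (∀ P : MvPolynomial (Fin n) ℂ, coeff 0 P = 0 → F P = 0) := by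
  have hFP := stmt0_general G hGfin F hF
  exact ⟨fun i => hFP _ (coeff_zero_X i), hFP⟩
end

section
/- Let n ≥ 1 and let y₁,…,yₙ ∈ ℂ[u₁,…,uₙ] be polynomials whose Jacobian matrix M, with entries M_{i,a} = ∂yᵢ/∂u_a, has nonzero determinant J := det M. In the fraction field ℂ(u₁,…,uₙ) of ℂ[u₁,…,uₙ], for i = 1,…,n define the derivation D_i := J⁻¹ · Σ_{a=1}^n (adj M)_{a,i} · ∂/∂u_a, where adj M denotes the adjugate matrix of M and ∂/∂u_a is the canonical extension of the formal partial derivative to the fraction field. Then for every s ≥ 1, all indices i₁,…,i_s ∈ {1,…,n}, and every a ∈ {1,…,n}, the element J^{2s−1} · (D_{i₁} ∘ ⋯ ∘ D_{i_s})(u_a) of ℂ(u₁,…,uₙ) lies in the image of the polynomial ring ℂ[u₁,…,uₙ], i.e., it is a polynomial. -/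
open MvPolynomial

/-!
If `J ^ k * x` is a polynomial, so is
`J ^ (k + 1) * ∂x = J * ∂(J ^ k * x) - k * (J ^ k * x) * ∂J`. Since `J * D_i` is a polynomial
combination of the partial derivatives, each application of a `D_i` raises the exponent of `J` by
at most two. The first application, to the polynomial `u_a`, raises it by only one, whence the
exponent `2 * s - 1`. The same computation applies to any subring of a commutative ring that
contains `J` and is stable under the derivations in question.
-/

section Subring

variable {k K ι κ : Type*} [CommSemiring k] [CommRing K] [Algebra k K] {S : Subring K} {J : K}

theorem pow_succ_mul_derivation_apply (δ : Derivation k K K) (J x : K) (m : ℕ) :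
    J ^ (m + 1) * δ x = J * δ (J ^ m * x) - m * (J ^ m * x) * δ J := by
  cases m with
  | zero => simp
  | succ m =>
    simp only [Derivation.leibniz, Derivation.leibniz_pow, smul_eq_mul, nsmul_eq_mul,
      Nat.add_sub_cancel]
    ring

theorem pow_succ_mul_derivation_mem (hJ : J ∈ S) {δ : Derivation k K K}
    (hδ : Set.MapsTo δ S S) {m : ℕ} {x : K} (hx : J ^ m * x ∈ S) :
    J ^ (m + 1) * δ x ∈ S := by
  rw [pow_succ_mul_derivation_apply]
  exact sub_mem (mul_mem hJ (hδ hx)) (mul_mem (mul_mem (natCast_mem S m) hx) (hδ hJ))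

theorem pow_succ_mul_mem_of_mul_eq_sum [Fintype κ] {c w : κ → K} {z : K} {m : ℕ}
    (hc : ∀ a, c a ∈ S) (hw : ∀ a, J ^ m * w a ∈ S) (hz : J * z = ∑ a, c a * w a) :
    J ^ (m + 1) * z ∈ S := by
  have hsum : J ^ (m + 1) * z = ∑ a, c a * (J ^ m * w a) := by
    simp only [pow_succ, mul_assoc, hz, Finset.mul_sum, mul_left_comm]
  rw [hsum]
  exact sum_mem fun a _ => mul_mem (hc a) (hw a)

theorem stmt3_general [Fintype κ] (hJ : J ∈ S) {δ : κ → Derivation k K K}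
    (hδ : ∀ a, Set.MapsTo (δ a) S S) {c : ι → κ → K} (hc : ∀ i a, c i a ∈ S) {E : ι → K → K}
    (hE : ∀ i x, J * E i x = ∑ a, c i a * δ a x) {l : List ι} (hl : l ≠ []) {f : K} (hf : f ∈ S) :
    J ^ (2 * l.length - 1) * l.foldr E f ∈ S := by
  induction l, hl using List.recNeNil with
  | singleton i =>
    have hδf (a : κ) : J ^ 0 * δ a f ∈ S := by simpa using hδ a hf
    exact pow_succ_mul_mem_of_mul_eq_sum (hc i) hδf (hE i f)
  | cons i t ht ih =>
    have hlength : 2 * (i :: t).length - 1 = 2 * t.length - 1 + 1 + 1 := by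
      have := List.length_pos_iff.mpr ht
      rw [List.length_cons]
      omega
    rw [hlength, List.foldr_cons]
    exact pow_succ_mul_mem_of_mul_eq_sum (hc i)
      (fun a => pow_succ_mul_derivation_mem hJ (hδ a) ih) (hE i _)

end Subring

theorem stmt3 (n : ℕ) (hn : 1 ≤ n)
    (y : Fin n → MvPolynomial (Fin n) ℂ)
    (M : Matrix (Fin n) (Fin n) (MvPolynomial (Fin n) ℂ))
    (hM : M = Matrix.of fun i a => pderiv a (y i))
    (hJ : M.det ≠ 0)
    (D : Fin n → Derivation ℂ (FractionRing (MvPolynomial (Fin n) ℂ))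
      (FractionRing (MvPolynomial (Fin n) ℂ)))
    (hD : ∀ (a : Fin n) (P : MvPolynomial (Fin n) ℂ),
      D a (algebraMap (MvPolynomial (Fin n) ℂ) (FractionRing (MvPolynomial (Fin n) ℂ)) P)
        = algebraMap (MvPolynomial (Fin n) ℂ) (FractionRing (MvPolynomial (Fin n) ℂ))
            (pderiv a P))
    (Dy : Fin n → FractionRing (MvPolynomial (Fin n) ℂ) → FractionRing (MvPolynomial (Fin n) ℂ))
    (hDy : ∀ i x, Dy i x =
      (algebraMap (MvPolynomial (Fin n) ℂ) (FractionRing (MvPolynomial (Fin n) ℂ)) M.det)⁻¹ *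
        ∑ a, algebraMap (MvPolynomial (Fin n) ℂ) (FractionRing (MvPolynomial (Fin n) ℂ))
          (M.adjugate a i) * D a x)
    (l : List (Fin n)) (hl : l ≠ []) (a : Fin n) :
    algebraMap (MvPolynomial (Fin n) ℂ) (FractionRing (MvPolynomial (Fin n) ℂ)) M.det
        ^ (2 * l.length - 1) *
      l.foldr (fun i acc => Dy i acc)
        (algebraMap (MvPolynomial (Fin n) ℂ) (FractionRing (MvPolynomial (Fin n) ℂ)) (X a))
      ∈ Set.range (algebraMap (MvPolynomial (Fin n) ℂ)
          (FractionRing (MvPolynomial (Fin n) ℂ))) := by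
  let φ := algebraMap (MvPolynomial (Fin n) ℂ) (FractionRing (MvPolynomial (Fin n) ℂ))
  have hdet : φ M.det ≠ 0 := by simpa [φ] using hJ
  have hDmaps (b : Fin n) : Set.MapsTo (D b) φ.range φ.range := by
    rintro _ ⟨P, rfl⟩
    exact ⟨pderiv b P, (hD b P).symm⟩
  have hDy_mul (i : Fin n) (x) : φ M.det * Dy i x = ∑ b, φ (M.adjugate b i) * D b x := by
    rw [hDy, mul_inv_cancel_left₀ hdet]
  exact stmt3_general (S := φ.range) ⟨M.det, rfl⟩ hDmaps (fun i b => ⟨M.adjugate b i, rfl⟩)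
    hDy_mul hl ⟨X a, rfl⟩
end

section
/- Let n, p ≥ 1, let G be a finite subgroup of GL(n, ℂ), and let K be a subgroup of G. Let V^K := {v ∈ ℂⁿ : k · v = v for all k ∈ K} be the subspace of fixed points of K. Let F : ℂ[u₁,…,uₙ] → ℂ[[X₁,…,X_p]] be a ℂ-algebra homomorphism such that F(P) = 0 for every polynomial P that vanishes at every point of the union ⋃_{g ∈ G} g · V^K. Then there exists g ∈ G such that F(P) = 0 for every polynomial P that vanishes at every point of g · V^K. -/
open MvPolynomial

/-!
The kernel of a homomorphism into a domain is prime, and a prime ideal containing a finite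
intersection of ideals contains one of them. The vanishing ideal of a finite union of sets is such
an intersection.
-/

section VanishingIdeal

variable {ι σ k K : Type*} [Field k] [Field K] [Algebra k K]

theorem vanishingIdeal_biUnion (s : Set ι) (Z : ι → Set (σ → K)) :
    vanishingIdeal k (⋃ i ∈ s, Z i) = ⨅ i ∈ s, vanishingIdeal k (Z i) :=
  zeroLocus_vanishingIdeal_galoisConnection.u_iInf₂

theorem vanishingIdeal_biUnion_le_iff {s : Set ι} (hs : s.Finite) {Z : ι → Set (σ → K)}
    {I : Ideal (MvPolynomial σ k)} (hI : I.IsPrime) :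
    vanishingIdeal k (⋃ i ∈ s, Z i) ≤ I ↔ ∃ i ∈ s, vanishingIdeal k (Z i) ≤ I := by
  lift s to Finset ι using hs
  rw [vanishingIdeal_biUnion]
  simp only [SetLike.mem_coe, ← Finset.inf_eq_iInf, hI.inf_le']

theorem stmt4_general {A : Type*} [Semiring A] [IsDomain A] {s : Set ι} (hs : s.Finite)
    (Z : ι → Set (σ → K)) (F : MvPolynomial σ k →+* A)
    (hF : ∀ P : MvPolynomial σ k, (∀ i ∈ s, ∀ v ∈ Z i, aeval v P = 0) → F P = 0) :
    ∃ i ∈ s, ∀ P : MvPolynomial σ k, (∀ v ∈ Z i, aeval v P = 0) → F P = 0 := by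
  have union_le_ker : vanishingIdeal k (⋃ i ∈ s, Z i) ≤ RingHom.ker F := fun P hP ↦
    hF P fun _ hi v hv ↦ hP v (Set.mem_biUnion hi hv)
  exact (vanishingIdeal_biUnion_le_iff hs (RingHom.ker_isPrime F)).mp union_le_ker

end VanishingIdeal

theorem stmt4 (n p : ℕ) (hn : 1 ≤ n) (hp : 1 ≤ p)
    (G : Subgroup (GL (Fin n) ℂ)) (hGfin : (G : Set (GL (Fin n) ℂ)).Finite)
    (K : Subgroup (GL (Fin n) ℂ)) (hKG : K ≤ G)
    (VK : Set (Fin n → ℂ))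
    (hVK : VK = {v : Fin n → ℂ |
      ∀ k ∈ K, Matrix.mulVec ((k : GL (Fin n) ℂ) : Matrix (Fin n) (Fin n) ℂ) v = v})
    (F : MvPolynomial (Fin n) ℂ →ₐ[ℂ] MvPowerSeries (Fin p) ℂ)
    (hF : ∀ P : MvPolynomial (Fin n) ℂ,
      (∀ g ∈ G, ∀ v ∈ VK,
        eval (Matrix.mulVec ((g : GL (Fin n) ℂ) : Matrix (Fin n) (Fin n) ℂ) v) P = 0) →
      F P = 0) :
    ∃ g ∈ G, ∀ P : MvPolynomial (Fin n) ℂ,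
      (∀ v ∈ VK,
        eval (Matrix.mulVec ((g : GL (Fin n) ℂ) : Matrix (Fin n) (Fin n) ℂ) v) P = 0) →
      F P = 0 := by
  have := NoZeroDivisors.to_isDomain (MvPowerSeries (Fin p) ℂ)
  simpa [aeval_eq_eval] using
    stmt4_general hGfin (fun g ↦ g.val.mulVec '' VK) F.toRingHom (by simpa [aeval_eq_eval] using hF)
end
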